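/- arXiv:1606.04532 — 2 statements merged into one kernel-verified Lean document; each statement's English description precedes it below -/
import Mathlib

section
/- Let G(F) be the quotient of GL_k(F) × GL_{k+1}(F) by the central subgroup N = {(c·I_k, c⁻¹·I_{k+1}) : c ∈ F^×}. Then G(F) acts freely and transitively on the set M_k(F) of nondegenerate 2 × k × (k+1) hypermatrices over F; in particular, for any fixed x ∈ M_k(F), the map g ↦ g·x is a bijection G(F) → M_k(F). -/
open Matrix

/-- The set of nondegenerate `2 × k × (k+1)` hypermatrices over `F`. -/
def Mk (F : Type*) [Field F] (k : ℕ) :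
    Set (Matrix (Fin (k+1)) (Fin k) F × Matrix (Fin (k+1)) (Fin k) F) :=
  {S | ∀ c₀ c₁ : AlgebraicClosure F, ¬ (c₀ = 0 ∧ c₁ = 0) →
    (c₀ • S.1.map (algebraMap F (AlgebraicClosure F)) +
     c₁ • S.2.map (algebraMap F (AlgebraicClosure F))).rank = k}

/-- The action of `GL_k(F) × GL_{k+1}(F)` on hypermatrices: `(A,B)·(S₀,S₁) = (B S₀ Aᵀ, B S₁ Aᵀ)`. -/
def hmAct {F : Type*} [Field F] {k : ℕ} (g : GL (Fin k) F × GL (Fin (k+1)) F)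
    (S : Matrix (Fin (k+1)) (Fin k) F × Matrix (Fin (k+1)) (Fin k) F) :
    Matrix (Fin (k+1)) (Fin k) F × Matrix (Fin (k+1)) (Fin k) F :=
  ((g.2 : Matrix (Fin (k+1)) (Fin (k+1)) F) * S.1 * (g.1 : Matrix (Fin k) (Fin k) F)ᵀ,
   (g.2 : Matrix (Fin (k+1)) (Fin (k+1)) F) * S.2 * (g.1 : Matrix (Fin k) (Fin k) F)ᵀ)

/-- The central subgroup `N = {(c·I_k, c⁻¹·I_{k+1})}`, as a subset of the product group. -/
def Nset (F : Type*) [Field F] (k : ℕ) : Set (GL (Fin k) F × GL (Fin (k+1)) F) :=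
  {g | ∃ c : Fˣ,
    (g.1 : Matrix (Fin k) (Fin k) F) = (c : F) • (1 : Matrix (Fin k) (Fin k) F) ∧
    (g.2 : Matrix (Fin (k+1)) (Fin (k+1)) F) =
      ((c⁻¹ : Fˣ) : F) • (1 : Matrix (Fin (k+1)) (Fin (k+1)) F)}

/-!
View a pair `(S₀, S₁)` as a pencil of linear maps `F^k → F^(k+1)`; a group element taking `S` to `T`
is then an invertible intertwiner, i.e. a pair `(P, B)` with `B Sᵢ = Tᵢ P`, where `P = (A⁻¹)ᵀ`.
Intertwiners are the solutions of `2k(k+1)` linear equations in `k² + (k+1)² = 2k(k+1) + 1`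
unknowns, so a nonzero one always exists. Over the algebraic closure, a nonzero subspace `W₀` of the
source of a nondegenerate pencil can only be mapped by both maps into a `V₀` of strictly larger
dimension, since otherwise the pencil restricted to `W₀` has an eigenvector. Comparing this for the
kernels and the ranges of `P` and `B` with the total dimensions `k` and `k + 1` shows that a nonzero
intertwiner is invertible. This gives transitivity, and by Schur's lemma the stabilizers are scalar.
-/

section Pencil

variable {K W V W' V' : Type*} [Field K] [AddCommGroup W] [Module K W] [AddCommGroup V] [Module K V]
  [AddCommGroup W'] [Module K W'] [AddCommGroup V'] [Module K V']
  {f g : W →ₗ[K] V} {f' g' : W' →ₗ[K] V'} {p : W →ₗ[K] W'} {q : V →ₗ[K] V'}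

/-- A pencil of linear maps `a • f + b • g` is nondegenerate if all its nonzero members are
injective. Over an algebraically closed field this is the coordinate-free form of `Mk`. -/
def IsNondegeneratePencil (f g : W →ₗ[K] V) : Prop :=
  ∀ a b : K, ¬ (a = 0 ∧ b = 0) → Function.Injective (a • f + b • g)

lemma IsNondegeneratePencil.injective_left (h : IsNondegeneratePencil f g) :
    Function.Injective f := by
  simpa using h 1 0 (by simp)

lemma IsNondegeneratePencil.restrict (h : IsNondegeneratePencil f g) {W₀ : Submodule K W}
    {V₀ : Submodule K V} (hf : ∀ w ∈ W₀, f w ∈ V₀) (hg : ∀ w ∈ W₀, g w ∈ V₀) :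
    IsNondegeneratePencil (f.restrict hf) (g.restrict hg) := fun a b hab w₁ w₂ hw ↦
  Subtype.ext <| h a b hab <| by simpa using congrArg Subtype.val hw

variable [IsAlgClosed K] [FiniteDimensional K W] [FiniteDimensional K V]

-- If the dimensions agreed, an eigenvector of `f⁻¹ ∘ g` with eigenvalue `μ` would lie in the kernel
-- of `g - μ • f`.
lemma IsNondegeneratePencil.finrank_lt_finrank [Nontrivial W] (h : IsNondegeneratePencil f g) :
    Module.finrank K W < Module.finrank K V := by
  refine (LinearMap.finrank_le_finrank_of_injective h.injective_left).lt_of_ne fun heq ↦ ?_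
  let e : W ≃ₗ[K] V := f.linearEquivOfInjective h.injective_left heq
  obtain ⟨μ, hμ⟩ := Module.End.exists_eigenvalue (e.symm.toLinearMap ∘ₗ g)
  obtain ⟨w, hw⟩ := hμ.exists_hasEigenvector
  have hgw : g w = μ • f w := by
    simpa [e, LinearEquiv.symm_apply_eq] using hw.apply_eq_smul
  refine hw.2 (h (-μ) 1 (by simp) ?_)
  simp [hgw]

lemma IsNondegeneratePencil.finrank_ker_lt_finrank_ker (h : IsNondegeneratePencil f g)
    (hf : q ∘ₗ f = f' ∘ₗ p) (hg : q ∘ₗ g = g' ∘ₗ p) (hp : LinearMap.ker p ≠ ⊥) :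
    Module.finrank K (LinearMap.ker p) < Module.finrank K (LinearMap.ker q) := by
  have hf_ker (w) (hw : w ∈ LinearMap.ker p) : f w ∈ LinearMap.ker q := by
    simpa [LinearMap.mem_ker.1 hw] using LinearMap.congr_fun hf w
  have hg_ker (w) (hw : w ∈ LinearMap.ker p) : g w ∈ LinearMap.ker q := by
    simpa [LinearMap.mem_ker.1 hw] using LinearMap.congr_fun hg w
  have := Submodule.nontrivial_iff_ne_bot.2 hp
  exact (h.restrict hf_ker hg_ker).finrank_lt_finrank

lemma IsNondegeneratePencil.finrank_range_lt_finrank_range (h' : IsNondegeneratePencil f' g')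
    (hf : q ∘ₗ f = f' ∘ₗ p) (hg : q ∘ₗ g = g' ∘ₗ p) (hp : p ≠ 0) :
    Module.finrank K (LinearMap.range p) < Module.finrank K (LinearMap.range q) := by
  have hf_range : ∀ w ∈ LinearMap.range p, f' w ∈ LinearMap.range q := by
    rintro _ ⟨w, rfl⟩
    exact ⟨f w, LinearMap.congr_fun hf w⟩
  have hg_range : ∀ w ∈ LinearMap.range p, g' w ∈ LinearMap.range q := by
    rintro _ ⟨w, rfl⟩
    exact ⟨g w, LinearMap.congr_fun hg w⟩
  have := Submodule.nontrivial_iff_ne_bot.2 (LinearMap.range_eq_bot.not.2 hp)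
  exact (h'.restrict hf_range hg_range).finrank_lt_finrank

theorem IsNondegeneratePencil.injective_of_intertwines (h : IsNondegeneratePencil f g)
    (h' : IsNondegeneratePencil f' g') (hf : q ∘ₗ f = f' ∘ₗ p) (hg : q ∘ₗ g = g' ∘ₗ p)
    (hdim : Module.finrank K V ≤ Module.finrank K W + 1) (hpq : ¬ (p = 0 ∧ q = 0)) :
    Function.Injective p ∧ Function.Injective q := by
  have hrange : Module.finrank K (LinearMap.range p) < Module.finrank K (LinearMap.range q) := by
    by_cases hp : p = 0
    · have hq := LinearMap.range_eq_bot.not.2 fun hq ↦ hpq ⟨hp, hq⟩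
      rw [hp, LinearMap.range_zero, finrank_bot]
      exact Module.finrank_pos_iff.2 (Submodule.nontrivial_iff_ne_bot.2 hq)
    · exact h'.finrank_range_lt_finrank_range hf hg hp
  have hp_add := LinearMap.finrank_range_add_finrank_ker p
  have hq_add := LinearMap.finrank_range_add_finrank_ker q
  have hp : LinearMap.ker p = ⊥ := by
    by_contra hp
    have := h.finrank_ker_lt_finrank_ker hf hg hp
    omega
  rw [hp, finrank_bot] at hp_add
  have hq : LinearMap.ker q = ⊥ := Submodule.finrank_eq_zero.1 (by omega)
  exact ⟨LinearMap.ker_eq_bot.1 hp, LinearMap.ker_eq_bot.1 hq⟩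

-- Schur's lemma: subtracting an eigenvalue of `q` leaves an intertwiner that is not injective.
theorem IsNondegeneratePencil.exists_eq_smul_id (h : IsNondegeneratePencil f g)
    {p : W →ₗ[K] W} {q : V →ₗ[K] V} (hf : q ∘ₗ f = f ∘ₗ p) (hg : q ∘ₗ g = g ∘ₗ p)
    (hdim : Module.finrank K V = Module.finrank K W + 1) :
    ∃ c : K, p = c • LinearMap.id ∧ q = c • LinearMap.id := by
  have : Nontrivial V := Module.nontrivial_of_finrank_pos (R := K) (by omega)
  obtain ⟨c, hc⟩ := Module.End.exists_eigenvalue q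
  obtain ⟨v, hv⟩ := hc.exists_hasEigenvector
  refine ⟨c, ?_⟩
  rw [← sub_eq_zero, ← sub_eq_zero (a := q)]
  by_contra hne
  have hinj := (h.injective_of_intertwines h
    (p := p - c • LinearMap.id) (q := q - c • LinearMap.id)
    (by simp [LinearMap.sub_comp, LinearMap.comp_sub, LinearMap.smul_comp, LinearMap.comp_smul, hf])
    (by simp [LinearMap.sub_comp, LinearMap.comp_sub, LinearMap.smul_comp, LinearMap.comp_smul, hg])
    hdim.le hne).2
  exact hv.2 (hinj (by simp [hv.apply_eq_smul]))

end Pencil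

section Matrix

variable {R A F m n m' n' : Type*} [CommRing R] [CommRing A] [Field F] [Fintype n]

lemma rank_eq_card_iff_mulVec_injective {M : Matrix m n F} :
    M.rank = Fintype.card n ↔ Function.Injective M.mulVec := by
  rw [mulVec_injective_iff, linearIndependent_iff_card_eq_finrank_span,
    rank_eq_finrank_span_cols, Set.finrank, eq_comm]

lemma isUnit_map_matrix_iff [DecidableEq n] (φ : R →+* A) [IsLocalHom φ] {M : Matrix n n R} :
    IsUnit (M.map φ) ↔ IsUnit M := by
  rw [isUnit_iff_isUnit_det, isUnit_iff_isUnit_det, ← isUnit_map_iff φ, φ.map_det,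
    RingHom.mapMatrix_apply]

lemma isUnit_of_mulVecLin_map_injective [DecidableEq n] (φ : R →+* F) [IsLocalHom φ]
    {M : Matrix n n R} (hM : Function.Injective (M.map φ).mulVecLin) : IsUnit M :=
  (isUnit_map_matrix_iff φ).1 (mulVec_injective_iff_isUnit.1 hM)

lemma mulVecLin_map_comp_eq [Fintype m] [Fintype n'] (φ : R →+* A) {S : Matrix m n R}
    {T : Matrix m' n' R} {P : Matrix n' n R} {B : Matrix m' m R} (h : B * S = T * P) :
    (B.map φ).mulVecLin ∘ₗ (S.map φ).mulVecLin = (T.map φ).mulVecLin ∘ₗ (P.map φ).mulVecLin := by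
  rw [← mulVecLin_mul, ← mulVecLin_mul, ← Matrix.map_mul, ← Matrix.map_mul, h]

lemma mulVecLin_map_eq_zero_iff {φ : R →+* A} (hφ : Function.Injective φ) {M : Matrix m n R} :
    (M.map φ).mulVecLin = 0 ↔ M = 0 := by
  classical
  rw [← mulVecLin_zero, ← toLin'_apply', ← toLin'_apply', toLin'.injective.eq_iff,
    ← Matrix.map_zero φ φ.map_zero, (Matrix.map_injective hφ).eq_iff]

lemma mulVecLin_eq_smul_id_iff [DecidableEq n] {M : Matrix n n R} {c : R} :
    M.mulVecLin = c • LinearMap.id ↔ M = c • 1 := by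
  rw [← toLin'_one, ← map_smul, ← toLin'_apply', toLin'.injective.eq_iff]

lemma mulVecLin_map_eq_smul_id_iff [DecidableEq n] {φ : R →+* A} (hφ : Function.Injective φ)
    {M : Matrix n n R} {c : R} : (M.map φ).mulVecLin = φ c • LinearMap.id ↔ M = c • 1 := by
  have hmap : (φ c • 1 : Matrix n n A) = (c • 1 : Matrix n n R).map φ := by
    simp [Matrix.map_smul']
  rw [mulVecLin_eq_smul_id_iff, hmap, (Matrix.map_injective hφ).eq_iff]

lemma mul_transpose_eq_iff [DecidableEq n] {M N : Matrix m n R} {U : GL n R} :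
    M * (U : Matrix n n R)ᵀ = N ↔ M = N * (↑U⁻¹ : Matrix n n R)ᵀ := by
  constructor <;> rintro rfl <;> rw [Matrix.mul_assoc, ← transpose_mul] <;> simp

lemma exists_intertwiner_ne_zero [Fintype m] [Fintype m'] [Fintype n']
    (S : Matrix m n F × Matrix m n F) (T : Matrix m' n' F × Matrix m' n' F)
    (hcard : 2 * (Fintype.card m' * Fintype.card n) <
      Fintype.card n' * Fintype.card n + Fintype.card m' * Fintype.card m) :
    ∃ (P : Matrix n' n F) (B : Matrix m' m F),
      ¬ (P = 0 ∧ B = 0) ∧ B * S.1 = T.1 * P ∧ B * S.2 = T.2 * P := by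
  let defect (S : Matrix m n F) (T : Matrix m' n' F) :
      Matrix n' n F × Matrix m' m F →ₗ[F] Matrix m' n F :=
    mulRightLinearMap m' F S ∘ₗ LinearMap.snd F _ _ - mulLeftLinearMap n F T ∘ₗ LinearMap.fst F _ _
  have hker : LinearMap.ker ((defect S.1 T.1).prod (defect S.2 T.2)) ≠ ⊥ := by
    apply LinearMap.ker_ne_bot_of_finrank_lt
    simpa [Module.finrank_matrix, two_mul] using hcard
  obtain ⟨⟨P, B⟩, hPB, hne⟩ := Submodule.exists_mem_ne_zero_of_ne_bot hker
  have hdefect : B * S.1 - T.1 * P = 0 ∧ B * S.2 - T.2 * P = 0 := by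
    simpa [defect] using hPB
  exact ⟨P, B, by simpa [Prod.ext_iff] using hne, sub_eq_zero.1 hdefect.1, sub_eq_zero.1 hdefect.2⟩

end Matrix

section Hypermatrix

variable {F : Type*} [Field F] {k : ℕ}
  {S T : Matrix (Fin (k + 1)) (Fin k) F × Matrix (Fin (k + 1)) (Fin k) F}
  {P : Matrix (Fin k) (Fin k) F} {B : Matrix (Fin (k + 1)) (Fin (k + 1)) F}

lemma mem_Mk_iff_isNondegeneratePencil :
    S ∈ Mk F k ↔ IsNondegeneratePencil
      (S.1.map (algebraMap F (AlgebraicClosure F))).mulVecLin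
      (S.2.map (algebraMap F (AlgebraicClosure F))).mulVecLin := by
  refine forall₃_congr fun a b _ ↦ ?_
  simp only [← toLin'_apply', ← map_smul, ← map_add]
  rw [toLin'_apply', coe_mulVecLin, ← rank_eq_card_iff_mulVec_injective, Fintype.card_fin]

lemma isUnit_of_intertwines (hS : S ∈ Mk F k) (hT : T ∈ Mk F k) (h₁ : B * S.1 = T.1 * P)
    (h₂ : B * S.2 = T.2 * P) (hne : ¬ (P = 0 ∧ B = 0)) : IsUnit P ∧ IsUnit B := by
  let φ := algebraMap F (AlgebraicClosure F)
  rw [← mulVecLin_map_eq_zero_iff φ.injective, ← mulVecLin_map_eq_zero_iff φ.injective] at hne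
  have hinj := (mem_Mk_iff_isNondegeneratePencil.1 hS).injective_of_intertwines
    (mem_Mk_iff_isNondegeneratePencil.1 hT) (mulVecLin_map_comp_eq φ h₁)
    (mulVecLin_map_comp_eq φ h₂) (by simp) hne
  exact hinj.imp (isUnit_of_mulVecLin_map_injective φ) (isUnit_of_mulVecLin_map_injective φ)

lemma exists_eq_smul_one_of_intertwines (hS : S ∈ Mk F k) (h₁ : B * S.1 = S.1 * P)
    (h₂ : B * S.2 = S.2 * P) : ∃ c : F, P = c • 1 ∧ B = c • 1 := by
  let φ := algebraMap F (AlgebraicClosure F)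
  obtain ⟨c, hP, hB⟩ := (mem_Mk_iff_isNondegeneratePencil.1 hS).exists_eq_smul_id
    (mulVecLin_map_comp_eq φ h₁) (mulVecLin_map_comp_eq φ h₂) (by simp)
  obtain rfl : φ (B 0 0) = c := by
    simpa using congr_fun₂ (mulVecLin_eq_smul_id_iff.1 hB) 0 0
  exact ⟨B 0 0, (mulVecLin_map_eq_smul_id_iff φ.injective).1 hP,
    (mulVecLin_map_eq_smul_id_iff φ.injective).1 hB⟩

lemma hmAct_mul (g h : GL (Fin k) F × GL (Fin (k + 1)) F) :
    hmAct (g * h) S = hmAct g (hmAct h S) := by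
  simp [hmAct, Matrix.mul_assoc]

lemma hmAct_one : hmAct 1 S = S := by
  simp [hmAct]

lemma hmAct_eq_iff_hmAct_inv_mul_eq {g g' : GL (Fin k) F × GL (Fin (k + 1)) F} :
    hmAct g S = hmAct g' S ↔ hmAct (g⁻¹ * g') S = S := by
  constructor <;> intro h
  · rw [hmAct_mul, ← h, ← hmAct_mul, inv_mul_cancel, hmAct_one]
  · rw [← mul_inv_cancel_left g g', hmAct_mul g, h]

lemma hmAct_eq_iff_intertwines {g : GL (Fin k) F × GL (Fin (k + 1)) F} :
    hmAct g S = T ↔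
      (g.2 : Matrix (Fin (k + 1)) (Fin (k + 1)) F) * S.1 =
        T.1 * (↑g.1⁻¹ : Matrix (Fin k) (Fin k) F)ᵀ ∧
      (g.2 : Matrix (Fin (k + 1)) (Fin (k + 1)) F) * S.2 =
        T.2 * (↑g.1⁻¹ : Matrix (Fin k) (Fin k) F)ᵀ := by
  rw [hmAct, Prod.ext_iff, mul_transpose_eq_iff, mul_transpose_eq_iff]

lemma exists_hmAct_eq (hS : S ∈ Mk F k) (hT : T ∈ Mk F k) :
    ∃ g : GL (Fin k) F × GL (Fin (k + 1)) F, hmAct g S = T := by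
  have hcard : 2 * ((k + 1) * k) < k * k + (k + 1) * (k + 1) := by linarith
  obtain ⟨P, B, hne, h₁, h₂⟩ := exists_intertwiner_ne_zero S T (by simpa using hcard)
  obtain ⟨hP, hB⟩ := isUnit_of_intertwines hS hT h₁ h₂ hne
  obtain ⟨A, hA⟩ := (isUnit_transpose P).2 hP
  obtain ⟨B, rfl⟩ := hB
  refine ⟨(A⁻¹, B), hmAct_eq_iff_intertwines.2 ?_⟩
  simpa [hA] using ⟨h₁, h₂⟩

lemma hmAct_eq_self_iff_mem_Nset (hS : S ∈ Mk F k) {g : GL (Fin k) F × GL (Fin (k + 1)) F} :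
    hmAct g S = S ↔ g ∈ Nset F k := by
  constructor
  · obtain ⟨A, B⟩ := g
    intro h
    obtain ⟨h₁, h₂⟩ := hmAct_eq_iff_intertwines.1 h
    obtain ⟨c, hA, hB⟩ := exists_eq_smul_one_of_intertwines hS h₁ h₂
    have hc : c ≠ 0 := by
      rintro rfl
      exact B.ne_zero (by rw [hB, zero_smul])
    have hA_inv : (↑A⁻¹ : Matrix (Fin k) (Fin k) F) = c • 1 := by
      simpa using congrArg transpose hA
    refine ⟨(Units.mk0 c hc)⁻¹, ?_, by simpa using hB⟩
    calc (A : Matrix (Fin k) (Fin k) F)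
        = c⁻¹ • ((A : Matrix (Fin k) (Fin k) F) * (↑A⁻¹ : Matrix (Fin k) (Fin k) F)) := by
          rw [hA_inv, Matrix.mul_smul, Matrix.mul_one, inv_smul_smul₀ hc]
      _ = (↑(Units.mk0 c hc)⁻¹ : F) • 1 := by simp
  · rintro ⟨c, hA, hB⟩
    simp [hmAct, hA, hB, smul_smul]

end Hypermatrix

/-- The quotient `G(F) = (GL_k × GL_{k+1})/N` acts freely and transitively on
`M_k(F)`: the action is transitive, and for any base point `x ∈ M_k(F)` two group elements move
`x` to the same point iff they lie in the same coset of `N`.  In particular `g ↦ g·x` induces a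
bijection `G(F) → M_k(F)`. -/
theorem stmt4 {F : Type*} [Field F] (k : ℕ) (x : Matrix (Fin (k+1)) (Fin k) F × Matrix (Fin (k+1)) (Fin k) F)
    (hx : x ∈ Mk F k) :
    (∀ m ∈ Mk F k, ∃ g : GL (Fin k) F × GL (Fin (k+1)) F, hmAct g x = m) ∧
    (∀ g g' : GL (Fin k) F × GL (Fin (k+1)) F,
      hmAct g x = hmAct g' x ↔ g⁻¹ * g' ∈ Nset F k) := by
  refine ⟨fun m hm ↦ exists_hmAct_eq hx hm, fun g g' ↦ ?_⟩
  rw [hmAct_eq_iff_hmAct_inv_mul_eq, hmAct_eq_self_iff_mem_Nset hx]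
end

section
/- For 2 × 2 × 3 hypermatrices: the number of nondegenerate 2 × 2 × 3 hypermatrices over F_q is q⁴(q-1)⁴(1+q)²(1+q+q²). -/
open Matrix

/-!
Contracting a pair `(A, B)` of `m × n` matrices with an `n × 2` matrix `X` gives the vector
`A x₀ + B x₁`, where `x₀`, `x₁` are the columns of `X`. The pair is nondegenerate exactly when no
nonzero `X` of rank at most one is contracted to zero. For `3 × 2` matrices a dimension count always
yields some `X ≠ 0` with zero contraction, which is therefore invertible, and after a change of
basis `X = 1`. Over an algebraically closed field the scalar matrices are then the only ones with
zero contraction, because `Y - s • 1` is singular for every eigenvalue `s` of `Y`. Hence the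
nondegenerate pairs form the `GL₃ × GL₂`-orbit of one standard pair, defined over the base field,
whose stabilizer consists of the pairs of equal scalars; the count is orbit–stabilizer.
-/

section Matrix

variable {m n R K : Type*} [Fintype n] [CommRing R] [Field K]

theorem rank_eq_card_iff_mulVec_eq_zero {M : Matrix m n K} :
    M.rank = Fintype.card n ↔ ∀ v, M *ᵥ v = 0 → v = 0 := by
  rw [rank_eq_finrank_span_cols, eq_comm, ← Set.finrank,
    ← linearIndependent_iff_card_eq_finrank_span, ← mulVec_injective_iff]
  exact injective_iff_map_eq_zero M.mulVecLin

theorem vecMulVec_col_row_of_det_eq_zero {X : Matrix (Fin 2) (Fin 2) R} (hX : X.det = 0)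
    (i j : Fin 2) : vecMulVec (X.col j) (X.row i) = X i j • X := by
  have hminor : ∀ i j k l, X k j * X i l = X i j * X k l := by
    rw [det_fin_two] at hX
    simp only [Fin.forall_fin_two]
    grind
  ext k l
  exact hminor i j k l

theorem exists_det_sub_smul_one_eq_zero [IsAlgClosed K] [DecidableEq n] [Nonempty n]
    (Y : Matrix n n K) : ∃ s : K, (Y - s • 1).det = 0 := by
  obtain ⟨s, hs⟩ := IsAlgClosed.exists_root Y.charpoly (by simp [charpoly_degree_eq_dim])
  refine ⟨s, ?_⟩
  rw [Polynomial.IsRoot.def, eval_charpoly] at hs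
  rw [← neg_sub, det_neg, smul_one_eq_diagonal, ← scalar_apply, hs, mul_zero]

variable [Fintype m] [DecidableEq m] [DecidableEq n]

/-- Pairs of invertible matrices act on rectangular matrices by change of bases in the target and
in the source. -/
instance equivalenceMulAction : MulAction (GL m R × GL n R) (Matrix m n R) where
  smul p A := p.1.val * A * p.2⁻¹.val
  one_smul A := by
    change (1 : Matrix m m R) * A * (1⁻¹ : GL n R).val = A
    simp
  mul_smul p q A := by
    change (p.1 * q.1).val * A * ((p.2 * q.2)⁻¹).val =
      p.1.val * (q.1.val * A * q.2⁻¹.val) * p.2⁻¹.val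
    simp only [_root_.mul_inv_rev, Units.val_mul, Matrix.mul_assoc]

theorem equivalence_smul_def (p : GL m R × GL n R) (A : Matrix m n R) :
    p • A = p.1.val * A * p.2⁻¹.val := rfl

theorem scalar_equivalence_smul (t : Rˣ) (A : Matrix m n R) :
    (GeneralLinearGroup.scalar m t, GeneralLinearGroup.scalar n t) • A = A := by
  rw [equivalence_smul_def, ← map_inv, GeneralLinearGroup.coe_scalar, GeneralLinearGroup.coe_scalar,
    scalar_apply, scalar_apply, ← smul_one_eq_diagonal, ← smul_one_eq_diagonal, Matrix.smul_mul,
    Matrix.one_mul, Matrix.mul_smul, Matrix.mul_one, smul_smul, Units.inv_mul, one_smul]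

theorem rank_equivalence_smul (p : GL m R × GL n R) (A : Matrix m n R) : (p • A).rank = A.rank := by
  rw [equivalence_smul_def,
    rank_mul_eq_left_of_isUnit_det _ _ ((isUnit_iff_isUnit_det _).1 p.2⁻¹.isUnit),
    rank_mul_eq_right_of_isUnit_det _ _ ((isUnit_iff_isUnit_det _).1 p.1.isUnit)]

end Matrix

/-- A hypermatrix of format `2 × n × m`, given by its two `m × n` slices. -/
abbrev MatrixPencil (m n R : Type*) := Matrix m n R × Matrix m n R

namespace MatrixPencil

section CommRing

variable {m n R R' : Type*} [Fintype n] [CommRing R] [CommRing R']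

/-- The extension of scalars of a hypermatrix along a ring homomorphism. -/
def map (f : R →+* R') (S : MatrixPencil m n R) : MatrixPencil m n R' :=
  (S.1.map f, S.2.map f)

/-- The contraction of a hypermatrix along its `2`- and `n`-directions, as a linear map on `n × 2`
matrices. -/
def contraction (S : MatrixPencil m n R) : Matrix n (Fin 2) R →ₗ[R] (m → R) where
  toFun X := S.1 *ᵥ X.col 0 + S.2 *ᵥ X.col 1
  map_add' X Y := by
    change S.1 *ᵥ (X.col 0 + Y.col 0) + S.2 *ᵥ (X.col 1 + Y.col 1) = _
    rw [mulVec_add, mulVec_add, add_add_add_comm]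
  map_smul' r X := by
    change S.1 *ᵥ (r • X.col 0) + S.2 *ᵥ (r • X.col 1) = _
    rw [mulVec_smul, mulVec_smul, ← smul_add, RingHom.id_apply]

theorem contraction_apply (S : MatrixPencil m n R) (X : Matrix n (Fin 2) R) :
    S.contraction X = S.1 *ᵥ X.col 0 + S.2 *ᵥ X.col 1 := rfl

theorem contraction_vecMulVec (S : MatrixPencil m n R) (u : n → R) (c : Fin 2 → R) :
    S.contraction (vecMulVec u c) = (c 0 • S.1 + c 1 • S.2) *ᵥ u := by
  have hcol (j : Fin 2) : (vecMulVec u c).col j = c j • u := by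
    ext i
    simp [vecMulVec_apply, mul_comm]
  rw [contraction_apply, hcol, hcol, mulVec_smul, mulVec_smul, add_mulVec, smul_mulVec, smul_mulVec]

theorem contraction_map (f : R →+* R') (S : MatrixPencil m n R) (X : Matrix n (Fin 2) R) :
    (S.map f).contraction (X.map f) = f ∘ S.contraction X := by
  ext i
  simp [contraction_apply, map, mulVec, dotProduct]

theorem contraction_mul_left [Fintype m] (H : Matrix m m R) (S : MatrixPencil m n R)
    (X : Matrix n (Fin 2) R) :
    contraction (H * S.1, H * S.2) X = H *ᵥ S.contraction X := by
  simp only [contraction_apply, mulVec_add, mulVec_mulVec]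

theorem contraction_mul_right (S : MatrixPencil m n R) (g : Matrix n n R)
    (X : Matrix n (Fin 2) R) :
    contraction (S.1 * g, S.2 * g) X = S.contraction (g * X) := by
  simp only [contraction_apply, ← mulVec_mulVec]
  rfl

variable [Fintype m] [DecidableEq m] [DecidableEq n]

theorem contraction_smul_mul (p : GL m R × GL n R) (S : MatrixPencil m n R)
    (X : Matrix n (Fin 2) R) :
    (p • S).contraction (p.2.val * X) = p.1.val *ᵥ S.contraction X := by
  change contraction (p.1.val * S.1 * p.2⁻¹.val, p.1.val * S.2 * p.2⁻¹.val) _ = _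
  rw [contraction_mul_right (p.1.val * S.1, p.1.val * S.2), ← Matrix.mul_assoc, Units.inv_mul,
    Matrix.one_mul, contraction_mul_left]

theorem map_smul (f : R →+* R') (p : GL m R × GL n R) (S : MatrixPencil m n R) :
    (p • S).map f =
      (GeneralLinearGroup.map f p.1, GeneralLinearGroup.map f p.2) • S.map f := by
  simp only [map, Prod.smul_def, equivalence_smul_def, Matrix.map_mul,
    ← GeneralLinearGroup.map_inv]
  rfl

end CommRing

section Nondegenerate

variable {m n K : Type*} [Fintype n] [Field K]

/-- A hypermatrix is nondegenerate if every nontrivial combination of its slices, with coefficients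
in the field `K` itself, has full column rank. Geometric nondegeneracy is this condition for the
extension of scalars to an algebraic closure. -/
def IsNondegenerate (S : MatrixPencil m n K) : Prop :=
  ∀ c₀ c₁ : K, ¬ (c₀ = 0 ∧ c₁ = 0) → (c₀ • S.1 + c₁ • S.2).rank = Fintype.card n

theorem isNondegenerate_iff_contraction_vecMulVec {S : MatrixPencil m n K} :
    S.IsNondegenerate ↔ ∀ u c, S.contraction (vecMulVec u c) = 0 → u = 0 ∨ c = 0 := by
  simp only [IsNondegenerate, rank_eq_card_iff_mulVec_eq_zero, contraction_vecMulVec]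
  constructor
  · intro h u c hu
    by_cases hc : c 0 = 0 ∧ c 1 = 0
    · exact Or.inr (by ext j; fin_cases j <;> simp [hc])
    · exact Or.inl (h _ _ hc u hu)
  · intro h c₀ c₁ hc u hu
    refine (h u ![c₀, c₁] hu).resolve_right fun hzero => hc ?_
    exact ⟨congrFun hzero 0, congrFun hzero 1⟩

theorem IsNondegenerate.smul [Fintype m] [DecidableEq m] [DecidableEq n] {S : MatrixPencil m n K}
    (hS : S.IsNondegenerate) (p : GL m K × GL n K) : (p • S).IsNondegenerate := by
  intro c₀ c₁ hc
  have hlin : c₀ • (p • S).1 + c₁ • (p • S).2 = p • (c₀ • S.1 + c₁ • S.2) := by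
    simp only [Prod.smul_def, equivalence_smul_def, Matrix.mul_add, Matrix.add_mul,
      Matrix.mul_smul, Matrix.smul_mul]
  rw [hlin, rank_equivalence_smul, hS c₀ c₁ hc]

theorem IsNondegenerate.eq_zero_of_det_eq_zero {S : MatrixPencil m (Fin 2) K}
    (hS : S.IsNondegenerate) {X : Matrix (Fin 2) (Fin 2) K} (hX : S.contraction X = 0)
    (hdet : X.det = 0) : X = 0 := by
  ext i j
  have hzero : S.contraction (vecMulVec (X.col j) (X.row i)) = 0 := by
    rw [vecMulVec_col_row_of_det_eq_zero hdet, _root_.map_smul, hX, smul_zero]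
  rcases isNondegenerate_iff_contraction_vecMulVec.1 hS _ _ hzero with h | h
  · exact congrFun h i
  · exact congrFun h j

theorem IsNondegenerate.exists_eq_smul_one [IsAlgClosed K] {S : MatrixPencil m (Fin 2) K}
    (hS : S.IsNondegenerate) (hone : S.contraction 1 = 0) {Y : Matrix (Fin 2) (Fin 2) K}
    (hY : S.contraction Y = 0) : ∃ s : K, Y = s • 1 := by
  obtain ⟨s, hs⟩ := exists_det_sub_smul_one_eq_zero Y
  refine ⟨s, sub_eq_zero.1 (hS.eq_zero_of_det_eq_zero ?_ hs)⟩
  rw [map_sub, _root_.map_smul, hY, hone, smul_zero, sub_zero]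

theorem exists_ne_zero_contraction_eq_zero [Fintype m] (S : MatrixPencil m n K)
    (hcard : Fintype.card m < Fintype.card n * 2) : ∃ X ≠ 0, S.contraction X = 0 := by
  have hker : S.contraction.ker ≠ ⊥ :=
    LinearMap.ker_ne_bot_of_finrank_lt (by simpa [Module.finrank_matrix] using hcard)
  obtain ⟨X, hX, hne⟩ := Submodule.exists_mem_ne_zero_of_ne_bot hker
  exact ⟨X, hne, hX⟩

end Nondegenerate

section Standard

/-- The standard nondegenerate hypermatrix, normalized so that the matrices with zero contraction
are the scalar ones. -/
def standard (R : Type*) [CommRing R] : MatrixPencil (Fin 3) (Fin 2) R :=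
  (!![1, 0; 0, 1; 0, 0], !![0, -1; 0, 0; 1, 0])

section CommRing

variable {R R' : Type*} [CommRing R] [CommRing R']

theorem map_standard (f : R →+* R') : (standard R).map f = standard R' := by
  ext i j <;> fin_cases i <;> fin_cases j <;> simp [map, standard]

theorem contraction_standard (X : Matrix (Fin 2) (Fin 2) R) :
    (standard R).contraction X = ![X 0 0 - X 1 1, X 1 0, X 0 1] := by
  ext i
  fin_cases i <;> simp [contraction_apply, standard, dotProduct, sub_eq_add_neg]

theorem contraction_standard_smul_one (s : R) : (standard R).contraction (s • 1) = 0 := by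
  simp [contraction_standard]

theorem eq_smul_one_of_contraction_standard_eq_zero {X : Matrix (Fin 2) (Fin 2) R}
    (hX : (standard R).contraction X = 0) : X = X 0 0 • 1 := by
  rw [contraction_standard] at hX
  have h₀ : X 0 0 = X 1 1 := sub_eq_zero.1 (congrFun hX 0)
  have h₁ : X 1 0 = 0 := congrFun hX 1
  have h₂ : X 0 1 = 0 := congrFun hX 2
  ext i j
  fin_cases i <;> fin_cases j <;> simp [h₀, h₁, h₂]

theorem contraction_standard_surjective : Function.Surjective (standard R).contraction := by
  intro w
  refine ⟨!![w 0, w 2; w 1, 0], ?_⟩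
  ext i
  fin_cases i <;> simp [contraction_standard]

theorem exists_eq_mul_standard {S : MatrixPencil (Fin 3) (Fin 2) R} (hS : S.contraction 1 = 0) :
    ∃ H : Matrix (Fin 3) (Fin 3) R, S = (H * (standard R).1, H * (standard R).2) := by
  have hcol (i : Fin 3) : S.2 i 1 = -S.1 i 0 := by
    refine eq_neg_of_add_eq_zero_right ?_
    simpa [contraction_apply, mulVec, dotProduct] using congrFun hS i
  refine ⟨of fun i => ![S.1 i 0, S.1 i 1, S.2 i 0], ?_⟩
  ext i j <;> fin_cases j <;> simp [standard, Matrix.mul_apply, Fin.sum_univ_three, hcol]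

theorem stabilizer_standard :
    MulAction.stabilizer (GL (Fin 3) R × GL (Fin 2) R) (standard R) =
      ((GeneralLinearGroup.scalar (Fin 3)).prod (GeneralLinearGroup.scalar (Fin 2))).range := by
  ext p
  rw [MulAction.mem_stabilizer_iff, MonoidHom.mem_range]
  constructor
  · intro hp
    have hcontr (X) : (standard R).contraction (p.2.val * X) =
        p.1.val *ᵥ (standard R).contraction X := by
      rw [← contraction_smul_mul, hp]
    have hzero : (standard R).contraction p.2.val = 0 := by
      rw [← Matrix.mul_one p.2.val, hcontr, ← one_smul R 1, contraction_standard_smul_one,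
        mulVec_zero]
    obtain ⟨s, hs⟩ : ∃ s : R, p.2.val = s • 1 :=
      ⟨_, eq_smul_one_of_contraction_standard_eq_zero hzero⟩
    have hunit : IsUnit s := by
      have hdet := (isUnit_iff_isUnit_det _).1 p.2.isUnit
      rwa [hs, det_smul, det_one, mul_one, isUnit_pow_iff Fintype.card_ne_zero] at hdet
    have hfst : p.1.val = s • 1 := by
      refine mulVec_injective (funext fun w => ?_)
      obtain ⟨X, rfl⟩ := contraction_standard_surjective w
      rw [← hcontr, hs, Matrix.smul_mul, Matrix.one_mul, _root_.map_smul, smul_mulVec, one_mulVec]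
    exact ⟨hunit.unit, Prod.ext (Units.ext ((smul_one_eq_diagonal s).symm.trans hfst.symm))
      (Units.ext ((smul_one_eq_diagonal s).symm.trans hs.symm))⟩
  · rintro ⟨t, rfl⟩
    exact Prod.ext (scalar_equivalence_smul t _) (scalar_equivalence_smul t _)

end CommRing

variable {K : Type*} [Field K]

theorem isNondegenerate_standard : (standard K).IsNondegenerate := by
  rw [isNondegenerate_iff_contraction_vecMulVec]
  intro u c h
  have hscalar := eq_smul_one_of_contraction_standard_eq_zero h
  have h₀₁ : u 0 * c 1 = 0 := by simpa [vecMulVec_apply] using congrFun₂ hscalar 0 1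
  have h₁₀ : u 1 * c 0 = 0 := by simpa [vecMulVec_apply] using congrFun₂ hscalar 1 0
  have h₁₁ : u 1 * c 1 = u 0 * c 0 := by simpa [vecMulVec_apply] using congrFun₂ hscalar 1 1
  simp only [funext_iff, Fin.forall_fin_two, Pi.zero_apply]
  grind

theorem det_ne_zero_of_isNondegenerate_mul_standard [IsAlgClosed K]
    {H : Matrix (Fin 3) (Fin 3) K}
    (hH : IsNondegenerate (H * (standard K).1, H * (standard K).2)) : H.det ≠ 0 := by
  intro hdet
  obtain ⟨w, hw, hHw⟩ := exists_mulVec_eq_zero_iff.2 hdet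
  obtain ⟨Y, rfl⟩ := contraction_standard_surjective w
  obtain ⟨s, rfl⟩ := hH.exists_eq_smul_one
    (by rw [contraction_mul_left, ← one_smul K 1, contraction_standard_smul_one, mulVec_zero])
    (by rw [contraction_mul_left, hHw])
  exact hw (contraction_standard_smul_one s)

end Standard

section Orbit

variable {F L : Type*} [Field F] [Field L]

theorem exists_contraction_eq_zero_of_isNondegenerate_map (f : F →+* L)
    {S : MatrixPencil (Fin 3) (Fin 2) F} (hS : (S.map f).IsNondegenerate) :
    ∃ g : GL (Fin 2) F, S.contraction g.val = 0 := by
  obtain ⟨X, hne, hX⟩ := S.exists_ne_zero_contraction_eq_zero (by simp)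
  have hmap : (S.map f).contraction (X.map f) = 0 := by
    rw [contraction_map, hX]
    exact funext fun _ => map_zero f
  have hdet : X.det ≠ 0 := fun hdet => by
    have hzero : X.map f = 0 := hS.eq_zero_of_det_eq_zero hmap
      (by rw [← RingHom.mapMatrix_apply, ← RingHom.map_det, hdet, map_zero])
    exact hne (map_injective f.injective (hzero.trans (Matrix.map_zero f f.map_zero).symm))
  exact ⟨GeneralLinearGroup.mkOfDetNeZero X hdet, hX⟩

variable [IsAlgClosed L]

theorem mem_orbit_standard_of_contraction_one (f : F →+* L) {S : MatrixPencil (Fin 3) (Fin 2) F}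
    (hS : (S.map f).IsNondegenerate) (hone : S.contraction 1 = 0) :
    S ∈ MulAction.orbit (GL (Fin 3) F × GL (Fin 2) F) (standard F) := by
  obtain ⟨H, rfl⟩ := exists_eq_mul_standard hone
  have hmap : map f (H * (standard F).1, H * (standard F).2) =
      (H.map f * (standard L).1, H.map f * (standard L).2) := by
    simp only [← map_standard f, map, Matrix.map_mul]
  rw [hmap] at hS
  have hdet : H.det ≠ 0 := by
    have hdet_map := det_ne_zero_of_isNondegenerate_mul_standard hS
    rwa [← RingHom.mapMatrix_apply, ← RingHom.map_det, map_ne_zero] at hdet_map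
  refine ⟨(GeneralLinearGroup.mkOfDetNeZero H hdet, 1), ?_⟩
  simp [Prod.smul_def, equivalence_smul_def, GeneralLinearGroup.mkOfDetNeZero]

theorem orbit_standard (f : F →+* L) :
    MulAction.orbit (GL (Fin 3) F × GL (Fin 2) F) (standard F) =
      {S | (S.map f).IsNondegenerate} := by
  ext S
  constructor
  · rintro ⟨p, rfl⟩
    change (map f (p • standard F)).IsNondegenerate
    rw [map_smul, map_standard]
    exact isNondegenerate_standard.smul _
  · intro hS
    obtain ⟨g, hg⟩ := exists_contraction_eq_zero_of_isNondegenerate_map f hS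
    rw [← MulAction.orbit_eq_iff, ← MulAction.orbit_smul ((1 : GL (Fin 3) F), g⁻¹) S,
      MulAction.orbit_eq_iff]
    refine mem_orbit_standard_of_contraction_one f ?_ ?_
    · rw [map_smul]
      exact IsNondegenerate.smul hS _
    · have hcontr := contraction_smul_mul (1, g⁻¹) S g.val
      rwa [Units.inv_mul, hg, mulVec_zero] at hcontr

theorem card_isNondegenerate_map_mul_card_units (f : F →+* L) :
    Nat.card {S : MatrixPencil (Fin 3) (Fin 2) F // (S.map f).IsNondegenerate} * Nat.card Fˣ =
      Nat.card (GL (Fin 3) F) * Nat.card (GL (Fin 2) F) := by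
  have hinj : Function.Injective
      ((GeneralLinearGroup.scalar (R := F) (Fin 3)).prod (GeneralLinearGroup.scalar (Fin 2))) := by
    intro s t hst
    exact Units.ext (congrFun₂ (congrArg (fun p => p.2.val) hst) 0 0)
  have horbit := (MulAction.stabilizer (GL (Fin 3) F × GL (Fin 2) F) (standard F)).index_mul_card
  rw [MulAction.index_stabilizer, orbit_standard f, stabilizer_standard, Nat.card_prod,
    ← Nat.card_congr (MonoidHom.ofInjective hinj).toEquiv] at horbit
  exact horbit

end Orbit

end MatrixPencil

theorem card_GL_eq_prod_geom_sum {F : Type*} [Field F] [Fintype F] (n : ℕ) :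
    Nat.card (GL (Fin n) F) = ∏ i : Fin n, Fintype.card F ^ (i : ℕ) *
      ((Fintype.card F - 1) * ∑ k ∈ Finset.range (n - i), Fintype.card F ^ k) := by
  rw [card_GL_field]
  refine Finset.prod_congr rfl fun i _ => ?_
  rw [mul_comm (_ - 1), geom_sum_mul_of_one_le Fintype.card_pos, Nat.mul_sub, ← pow_add,
    Nat.add_sub_cancel' i.is_lt.le, mul_one]

/-- The number of nondegenerate `2 × 2 × 3` hypermatrices over `F_q` — pairs
`(S₀, S₁)` of `3 × 2` matrices such that every nonzero `F̄_q`-linear combination `c₀S₀ + c₁S₁`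
has rank `2` — equals `q⁴ (q-1)⁴ (1+q)² (1+q+q²)`. -/
theorem stmt13 {F : Type*} [Field F] [Fintype F] :
    Nat.card {S : Matrix (Fin 3) (Fin 2) F × Matrix (Fin 3) (Fin 2) F //
        ∀ c₀ c₁ : AlgebraicClosure F, ¬ (c₀ = 0 ∧ c₁ = 0) →
          (c₀ • S.1.map (algebraMap F (AlgebraicClosure F)) +
           c₁ • S.2.map (algebraMap F (AlgebraicClosure F))).rank = 2} =
      (Fintype.card F) ^ 4 * (Fintype.card F - 1) ^ 4 *
        (1 + Fintype.card F) ^ 2 * (1 + Fintype.card F + Fintype.card F ^ 2) := by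
  have hcard := MatrixPencil.card_isNondegenerate_map_mul_card_units
    (algebraMap F (AlgebraicClosure F))
  rw [Nat.card_units, Nat.card_eq_fintype_card (α := F), card_GL_eq_prod_geom_sum,
    card_GL_eq_prod_geom_sum, Fin.prod_univ_three, Fin.prod_univ_two] at hcard
  refine Nat.eq_of_mul_eq_mul_right (Nat.sub_pos_of_lt (Fintype.one_lt_card (α := F)))
    (hcard.trans ?_)
  simp only [Fin.coe_ofNat_eq_mod, Nat.zero_mod, Nat.one_mod, Nat.mod_succ, Nat.sub_zero,
    Nat.add_one_sub_one, Nat.reduceSub, Finset.sum_range_succ, Finset.sum_range_zero]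
  ring
end
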